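/- Let k > 0 and suppose w_* and each w_i (i ∈ W) have shifted embeddings with respect to C, i.e. Cᵀ.mulVec w⃗_i = PMI_i − (log k)·𝟙 for every word involved. Then w⃗_* = (∑_{i∈W} w⃗_i) + C†.mulVec( ρ^{W,w_*} + σ^W − τ^W·𝟙 + (log k)(|W| − 1)·𝟙 ). (Paper's Corollary 4: paraphrases in word2vec-type embeddings that factorise the shifted PMI matrix acquire an additional error term linear in |W|.) -/

import Mathlib

/-!
Bayes' rule gives `PMI(A, B) = log p(B ∣ A) - log μ(B) = log p(A ∣ B) - log μ(A)`. The first form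
makes `ρ` the difference of the PMIs of `A_*` and `A_W`; the second makes `σ - τ` the difference
between the PMI of `A_W` and the sum of the PMIs of the `A_i`. Adding the two eliminates `A_W`, and
shifting every PMI by `log k` adds `(|W| - 1) log k`. The identity of embeddings is the image of
this identity of PMI vectors under a left inverse of `Cᵀ`.
-/

open MeasureTheory Real Finset Matrix

namespace AnalogiesExplained

variable {Ω : Type*}

/-- Conditional probability `p(B ∣ A) = μ(A ∩ B) / μ(A)` (as a real number). -/
noncomputable def condP [MeasurableSpace Ω] (μ : Measure Ω) (A B : Set Ω) : ℝ :=
  (μ (A ∩ B)).toReal / (μ A).toReal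

/-- Pointwise mutual information `PMI(A, B) = log (μ(A ∩ B) / (μ(A)·μ(B)))`. -/
noncomputable def PMI [MeasurableSpace Ω] (μ : Measure Ω) (A B : Set Ω) : ℝ :=
  Real.log ((μ (A ∩ B)).toReal / ((μ A).toReal * (μ B).toReal))

/-- The joint event of a finite word set: `A_W = ⋂ i ∈ W, A i`. -/
def jointEvent {ι : Type*} (A : ι → Set Ω) (W : Finset ι) : Set Ω :=
  ⋂ i ∈ W, A i

/-- Paraphrase error `ρ^{W,W*}_j = log (p(B_j ∣ A_{W*}) / p(B_j ∣ A_W))`. -/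
noncomputable def rho [MeasurableSpace Ω] (μ : Measure Ω) (AW AWstar B : Set Ω) : ℝ :=
  Real.log (condP μ AWstar B / condP μ AW B)

/-- Conditional-dependence error `σ^W_j = log (p(A_W ∣ B_j) / ∏_{i ∈ W} p(A_i ∣ B_j))`. -/
noncomputable def sigma [MeasurableSpace Ω] {ι : Type*} (μ : Measure Ω) (A : ι → Set Ω)
    (W : Finset ι) (B : Set Ω) : ℝ :=
  Real.log (condP μ B (jointEvent A W) / ∏ i ∈ W, condP μ B (A i))

/-- Marginal-dependence error `τ^W = log (μ(A_W) / ∏_{i ∈ W} μ(A_i))`. -/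
noncomputable def tau [MeasurableSpace Ω] {ι : Type*} (μ : Measure Ω) (A : ι → Set Ω)
    (W : Finset ι) : ℝ :=
  Real.log ((μ (jointEvent A W)).toReal / ∏ i ∈ W, (μ (A i)).toReal)

lemma log_div_prod {ι : Type*} {s : Finset ι} {a : ℝ} {f : ι → ℝ} (ha : a ≠ 0)
    (hf : ∀ i ∈ s, f i ≠ 0) :
    log (a / ∏ i ∈ s, f i) = log a - ∑ i ∈ s, log (f i) := by
  rw [log_div ha (prod_ne_zero_iff.mpr hf), log_prod hf]

section ErrorTerms

variable [MeasurableSpace Ω] {μ : Measure Ω} {ι : Type*} {A : ι → Set Ω} {W : Finset ι}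
  {S T B : Set Ω}

lemma condP_pos (hS : 0 < (μ S).toReal) (hST : 0 < (μ (S ∩ T)).toReal) : 0 < condP μ S T :=
  div_pos hST hS

lemma PMI_comm (μ : Measure Ω) (S T : Set Ω) : PMI μ S T = PMI μ T S := by
  rw [PMI, PMI, Set.inter_comm, mul_comm]

lemma PMI_eq_log_condP_sub_log (hS : 0 < (μ S).toReal) (hT : 0 < (μ T).toReal)
    (hST : 0 < (μ (S ∩ T)).toReal) :
    PMI μ S T = log (condP μ S T) - log (μ T).toReal := by
  rw [PMI, div_mul_eq_div_div, ← condP, log_div (condP_pos hS hST).ne' hT.ne']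

lemma PMI_eq_log_condP_swap_sub_log (hS : 0 < (μ S).toReal) (hT : 0 < (μ T).toReal)
    (hST : 0 < (μ (S ∩ T)).toReal) :
    PMI μ S T = log (condP μ T S) - log (μ S).toReal := by
  rw [PMI_comm, PMI_eq_log_condP_sub_log hT hS (Set.inter_comm S T ▸ hST)]

lemma rho_eq_PMI_sub_PMI (hS : 0 < (μ S).toReal) (hT : 0 < (μ T).toReal)
    (hB : 0 < (μ B).toReal) (hSB : 0 < (μ (S ∩ B)).toReal) (hTB : 0 < (μ (T ∩ B)).toReal) :
    rho μ S T B = PMI μ T B - PMI μ S B := by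
  rw [rho, log_div (condP_pos hT hTB).ne' (condP_pos hS hSB).ne',
    PMI_eq_log_condP_sub_log hT hB hTB,
    PMI_eq_log_condP_sub_log hS hB hSB, sub_sub_sub_cancel_right]

lemma sigma_sub_tau_eq_PMI_sub_sum_PMI (hA : ∀ i ∈ W, 0 < (μ (A i)).toReal)
    (hAW : 0 < (μ (jointEvent A W)).toReal) (hB : 0 < (μ B).toReal)
    (hAB : ∀ i ∈ W, 0 < (μ (A i ∩ B)).toReal) (hAWB : 0 < (μ (jointEvent A W ∩ B)).toReal) :
    sigma μ A W B - tau μ A W = PMI μ (jointEvent A W) B - ∑ i ∈ W, PMI μ (A i) B := by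
  have condP_pos_of_inter {S : Set Ω} (hSB : 0 < (μ (S ∩ B)).toReal) : 0 < condP μ B S :=
    condP_pos hB (Set.inter_comm S B ▸ hSB)
  have sigma_eq : sigma μ A W B =
      log (condP μ B (jointEvent A W)) - ∑ i ∈ W, log (condP μ B (A i)) :=
    log_div_prod (condP_pos_of_inter hAWB).ne' fun i hi => (condP_pos_of_inter (hAB i hi)).ne'
  have tau_eq : tau μ A W =
      log (μ (jointEvent A W)).toReal - ∑ i ∈ W, log (μ (A i)).toReal :=
    log_div_prod hAW.ne' fun i hi => (hA i hi).ne'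
  rw [sigma_eq, tau_eq, PMI_eq_log_condP_swap_sub_log hAW hB hAWB,
    sum_congr rfl fun i hi => PMI_eq_log_condP_swap_sub_log (hA i hi) hB (hAB i hi),
    sum_sub_distrib, sub_sub_sub_comm]

theorem rho_add_sigma_sub_tau_eq_PMI_sub_sum_PMI (hA : ∀ i ∈ W, 0 < (μ (A i)).toReal)
    (hT : 0 < (μ T).toReal) (hAW : 0 < (μ (jointEvent A W)).toReal) (hB : 0 < (μ B).toReal)
    (hAB : ∀ i ∈ W, 0 < (μ (A i ∩ B)).toReal) (hTB : 0 < (μ (T ∩ B)).toReal)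
    (hAWB : 0 < (μ (jointEvent A W ∩ B)).toReal) :
    rho μ (jointEvent A W) T B + sigma μ A W B - tau μ A W =
      PMI μ T B - ∑ i ∈ W, PMI μ (A i) B := by
  rw [add_sub_assoc, rho_eq_PMI_sub_PMI hAW hT hB hAWB hTB,
    sigma_sub_tau_eq_PMI_sub_sum_PMI hA hAW hB hAB hAWB, sub_add_sub_cancel]

end ErrorTerms

section LeftInverse

variable {R m n : Type*} [CommRing R] [Fintype m] [DecidableEq m] [Fintype n]

lemma inv_mul_mul_eq_one {C : Matrix m n R} {M : Matrix n m R} (hCM : IsUnit (C * M)) :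
    (C * M)⁻¹ * C * M = 1 := by
  rw [Matrix.mul_assoc, nonsing_inv_mul _ ((isUnit_iff_isUnit_det _).mp hCM)]

lemma eq_add_mulVec_of_mulVec_sub_eq {L : Matrix m n R} {M : Matrix n m R} (hLM : L * M = 1)
    {u v : m → R} {e : n → R} (h : M *ᵥ (u - v) = e) : u = v + L *ᵥ e := by
  rw [← h, mulVec_mulVec, hLM, one_mulVec, add_sub_cancel]

end LeftInverse

theorem paraphrase_embedding_shifted_general [MeasurableSpace Ω] (μ : Measure Ω)
    {ι m n : Type*} [Fintype m] [DecidableEq m] [Fintype n]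
    (A : ι → Set Ω) (Astar : Set Ω) (B : n → Set Ω) (W : Finset ι)
    (hA : ∀ i ∈ W, 0 < (μ (A i)).toReal)
    (hB : ∀ j, 0 < (μ (B j)).toReal)
    (hAs : 0 < (μ Astar).toReal)
    (hAW : 0 < (μ (jointEvent A W)).toReal)
    (hAB : ∀ i ∈ W, ∀ j, 0 < (μ (A i ∩ B j)).toReal)
    (hAsB : ∀ j, 0 < (μ (Astar ∩ B j)).toReal)
    (hAWB : ∀ j, 0 < (μ (jointEvent A W ∩ B j)).toReal)
    (s : ℝ) (L : Matrix m n ℝ) (M : Matrix n m ℝ) (hLM : L * M = 1)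
    (wstar : m → ℝ) (wv : ι → m → ℝ)
    (hws : M *ᵥ wstar = fun j => PMI μ Astar (B j) - s)
    (hwi : ∀ i ∈ W, M *ᵥ wv i = fun j => PMI μ (A i) (B j) - s) :
    wstar = (∑ i ∈ W, wv i) + L *ᵥ fun j =>
      rho μ (jointEvent A W) Astar (B j) + sigma μ A W (B j) - tau μ A W
        + s * ((W.card : ℝ) - 1) := by
  refine eq_add_mulVec_of_mulVec_sub_eq hLM ?_
  funext j
  calc (M *ᵥ (wstar - ∑ i ∈ W, wv i)) j
      = (PMI μ Astar (B j) - s) - ∑ i ∈ W, (PMI μ (A i) (B j) - s) := by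
        rw [mulVec_sub, mulVec_sum, hws, sum_congr rfl hwi, Pi.sub_apply, Finset.sum_apply]
    _ = PMI μ Astar (B j) - ∑ i ∈ W, PMI μ (A i) (B j) + s * ((W.card : ℝ) - 1) := by
        rw [sum_sub_distrib, sum_const, nsmul_eq_mul]
        ring
    _ = rho μ (jointEvent A W) Astar (B j) + sigma μ A W (B j) - tau μ A W
          + s * ((W.card : ℝ) - 1) := by
        rw [rho_add_sigma_sub_tau_eq_PMI_sub_sum_PMI hA hAs hAW (hB j) (fun i hi => hAB i hi j)
          (hAsB j) (hAWB j)]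

/-- **Corollary 4 (Paraphrases in W2V-type embeddings).** For shifted embeddings
(`Cᵀ w⃗_i = PMI_i − (log k)·𝟙`), the paraphrase identity acquires an additional error term
`(log k)(|W| − 1)·𝟙`. -/
theorem paraphrase_embedding_shifted
    [MeasurableSpace Ω] (μ : Measure Ω) [IsProbabilityMeasure μ]
    {ι : Type*} (A : ι → Set Ω) (Astar : Set Ω) {n : ℕ} (B : Fin n → Set Ω)
    (W : Finset ι)
    (hmA : ∀ i, MeasurableSet (A i)) (hmB : ∀ j, MeasurableSet (B j))
    (hmAs : MeasurableSet Astar)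
    (hA : ∀ i ∈ W, 0 < (μ (A i)).toReal)
    (hB : ∀ j, 0 < (μ (B j)).toReal)
    (hAs : 0 < (μ Astar).toReal)
    (hAW : 0 < (μ (jointEvent A W)).toReal)
    (hAB : ∀ i ∈ W, ∀ j, 0 < (μ (A i ∩ B j)).toReal)
    (hAsB : ∀ j, 0 < (μ (Astar ∩ B j)).toReal)
    (hAWB : ∀ j, 0 < (μ (jointEvent A W ∩ B j)).toReal)
    (k : ℝ) (hk : 0 < k)
    {d : ℕ} (C : Matrix (Fin d) (Fin n) ℝ)
    (hC : IsUnit (C * C.transpose))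
    (wstar : Fin d → ℝ) (wv : ι → Fin d → ℝ)
    (hws : C.transpose.mulVec wstar = fun j => PMI μ Astar (B j) - Real.log k)
    (hwi : ∀ i ∈ W, C.transpose.mulVec (wv i) = fun j => PMI μ (A i) (B j) - Real.log k) :
    wstar = (∑ i ∈ W, wv i)
      + ((C * C.transpose)⁻¹ * C).mulVec
          (fun j => rho μ (jointEvent A W) Astar (B j) + sigma μ A W (B j) - tau μ A W
            + Real.log k * ((W.card : ℝ) - 1)) := by
  exact paraphrase_embedding_shifted_general μ A Astar B W hA hB hAs hAW hAB hAsB hAWB (Real.log k)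
    _ C.transpose (inv_mul_mul_eq_one hC) wstar wv hws hwi

end AnalogiesExplained
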